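/- The combinatorial R-map and K-map satisfy the 3D reflection equation of type B₃ on ℕ⁹: as maps from ℕ⁹ to ℕ⁹, R₍₆,₈,₉₎ ∘ K₍₉,₇,₅,₃₎ ∘ R₍₂,₄,₉₎ ∘ R₍₂,₅,₈₎ ∘ K₍₈,₇,₄,₁₎ ∘ K₍₆,₃,₂,₁₎ ∘ R₍₄,₅,₆₎ = R₍₄,₅,₆₎ ∘ K₍₆,₃,₂,₁₎ ∘ K₍₈,₇,₄,₁₎ ∘ R₍₂,₅,₈₎ ∘ R₍₂,₄,₉₎ ∘ K₍₉,₇,₅,₃₎ ∘ R₍₆,₈,₉₎ (here K is applied at the listed positions read and written in the listed, descending, order). -/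

import Mathlib

/-- The combinatorial R-map on ℕ³: `R(a,b,c) = (b + (a−c)₊, min(a,c), b + (c−a)₊)`. -/
def combR : ℕ × ℕ × ℕ → ℕ × ℕ × ℕ :=
  fun p => (p.2.1 + (p.1 - p.2.2), min p.1 p.2.2, p.2.1 + (p.2.2 - p.1))

/-- The combinatorial K-map on ℕ⁴ (computed in ℤ, with nonnegative outputs). -/
def combK : ℕ × ℕ × ℕ × ℕ → ℕ × ℕ × ℕ × ℕ := fun p =>
  let a : ℤ := p.1; let b : ℤ := p.2.1; let c : ℤ := p.2.2.1; let d : ℤ := p.2.2.2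
  let x : ℤ := max (c - a + max (d - b) 0) 0
  ((x + a + b - d).toNat, (c - x + d - min a (c + x)).toNat,
    (min a (c + x)).toNat, (b + max (c + x - a) 0).toNat)

/-- `app3 f i j k` applies `f` to the components at positions `i, j, k` (in that order)
of an `N`-fold product, leaving all other components unchanged. -/
def app3 {V : Type*} {N : ℕ} (f : V × V × V → V × V × V) (i j k : Fin N)
    (v : Fin N → V) : Fin N → V := fun m =>
  if m = i then (f (v i, v j, v k)).1
  else if m = j then (f (v i, v j, v k)).2.1
  else if m = k then (f (v i, v j, v k)).2.2
  else v m

/-- `app4 f i j k l` applies `f` to the components at positions `i, j, k, l` (in that order)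
of an `N`-fold product, leaving all other components unchanged. -/
def app4 {V : Type*} {N : ℕ} (f : V × V × V × V → V × V × V × V) (i j k l : Fin N)
    (v : Fin N → V) : Fin N → V := fun m =>
  if m = i then (f (v i, v j, v k, v l)).1
  else if m = j then (f (v i, v j, v k, v l)).2.1
  else if m = k then (f (v i, v j, v k, v l)).2.2.1
  else if m = l then (f (v i, v j, v k, v l)).2.2.2
  else v m

/-!
The formulas of `combR` and `combK` are tropical: they arise from the subtraction-free rational maps
`geomR` and `geomK` by replacing `(*, /, +)` by `(+, -, min)`.

The rational maps express the braid relations between the root elements `1 + t eᵢ` of `Sp₆`.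
Both sides of the rational reflection equation therefore rewrite the same unipotent matrix, factored
along a reduced word of the longest element of the Weyl group, into a product along the reversed
word. Such a factorization with positive parameters is unique, so the two sides agree on the
positive elements of every ordered field.

Over a field with a positive infinitesimal `ε`, passing from a positive element to the exponent `k`
for which it has the Archimedean class of `ε ^ k` turns `(*, /, +)` into `(+, -, min)`, since
positive terms cannot cancel. The rational identity over the hyperreals thus becomes the
combinatorial one.
-/

/-- The positive elements of an ordered field, on which the geometric maps are defined. -/
abbrev PosElt (K : Type*) [Zero K] [LT K] : Type _ := {t : K // 0 < t}

section GeometricMaps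

variable {K : Type*} [Field K] [LinearOrder K] [IsStrictOrderedRing K]

/-- The geometric R-map, a subtraction-free lift of `combR`: replacing `(*, /, +)` by
`(+, -, min)` in its formulas gives `combR`. -/
def geomR (p : PosElt K × PosElt K × PosElt K) : PosElt K × PosElt K × PosElt K :=
  (p.1 * p.2.1 / (p.1 + p.2.2), p.1 + p.2.2, p.2.1 * p.2.2 / (p.1 + p.2.2))

/-- The geometric K-map, which lifts `combK` as `geomR` lifts `combR`. -/
def geomK (p : PosElt K × PosElt K × PosElt K × PosElt K) :
    PosElt K × PosElt K × PosElt K × PosElt K :=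
  let a := p.1; let b := p.2.1; let c := p.2.2.1; let d := p.2.2.2
  let s := a * b + (a + c) * d
  let t := a * a * b + (a + c) * (a + c) * d
  (a * b * c / s, s * s / t, t / s, b * c * c * d / t)

theorem PosElt.coe_div (a b : PosElt K) : ((a / b : PosElt K) : K) = a / b := by
  rw [div_eq_mul_inv, Positive.val_mul, Positive.coe_inv, div_eq_mul_inv]

end GeometricMaps

section RootElements

variable {K A : Type*} [CommRing K] [Ring A] [Algebra K A]

/-- The element `exp (t e) = 1 + t e` of the one-parameter subgroup of a square-zero `e`. -/
def rootElement (e : A) (t : K) : A := 1 + t • e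

/-- Relations between the Chevalley generators of two simple roots spanning a root system of type
`A₂`, in a sum of copies of its three-dimensional representations. -/
structure IsA2Pair (e f : A) : Prop where
  left_sq : e * e = 0
  right_sq : f * f = 0
  left_right_left : e * (f * e) = 0
  right_left_right : f * (e * f) = 0

/-- Relations between the Chevalley generators `e` of a short and `f` of a long simple root
spanning a root system of type `C₂`, in its four-dimensional representation. -/
structure IsC2Pair (e f : A) : Prop where
  left_sq : e * e = 0
  right_sq : f * f = 0
  right_left_right : f * (e * f) = 0

theorem IsA2Pair.symm {e f : A} (h : IsA2Pair e f) : IsA2Pair f e :=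
  ⟨h.right_sq, h.left_sq, h.right_left_right, h.left_right_left⟩

theorem rootElement_commute {e f : A} (h : Commute e f) (s t : K) :
    Commute (rootElement e s) (rootElement f t) :=
  (Commute.one_left _).add_left
    ((Commute.one_right _).add_right ((h.smul_left s).smul_right t))

theorem IsA2Pair.rootElement_mul_expand {e f : A} (h : IsA2Pair e f) (a b c : K) :
    rootElement e a * (rootElement f b * rootElement e c) =
      1 + (a + c) • e + b • f + (a * b) • (e * f) + (b * c) • (f * e) := by
  simp only [rootElement, mul_add, add_mul, one_mul, mul_one, smul_mul_assoc, mul_smul_comm,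
    h.left_sq, h.left_right_left, smul_zero]
  module

theorem IsC2Pair.rootElement_mul_expand_left {e f : A} (h : IsC2Pair e f) (a b c d : K) :
    rootElement e a * (rootElement f b * (rootElement e c * rootElement f d)) =
      1 + (a + c) • e + (b + d) • f + (a * b + (a + c) * d) • (e * f) +
        (b * c) • (f * e) + (a * b * c) • (e * (f * e)) := by
  have hee : e * (e * f) = 0 := by rw [← mul_assoc, h.left_sq, zero_mul]
  simp only [rootElement, mul_add, add_mul, one_mul, mul_one, smul_mul_assoc, mul_smul_comm,
    h.left_sq, h.right_sq, h.right_left_right, hee, mul_zero, smul_zero]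
  module

theorem IsC2Pair.rootElement_mul_expand_right {e f : A} (h : IsC2Pair e f) (a b c d : K) :
    rootElement f d * (rootElement e c * (rootElement f b * rootElement e a)) =
      1 + (a + c) • e + (b + d) • f + (b * c) • (e * f) +
        (a * b + (a + c) * d) • (f * e) + (a * b * c) • (e * (f * e)) := by
  have hff : f * (f * e) = 0 := by rw [← mul_assoc, h.right_sq, zero_mul]
  have hfefe : f * (e * (f * e)) = 0 := by
    rw [← mul_assoc e, ← mul_assoc, h.right_left_right, zero_mul]
  simp only [rootElement, mul_add, add_mul, one_mul, mul_one, smul_mul_assoc, mul_smul_comm,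
    h.left_sq, h.right_sq, h.right_left_right, hff, hfefe, mul_zero, smul_zero]
  module

end RootElements

section BraidRelations

variable {K A : Type*} [Field K] [LinearOrder K] [IsStrictOrderedRing K] [Ring A] [Algebra K A]

theorem IsA2Pair.rootElement_braid {e f : A} (h : IsA2Pair e f) (a b c : PosElt K) :
    rootElement e (c : K) * (rootElement f (b : K) * rootElement e (a : K)) =
      rootElement f ((geomR (a, b, c)).1 : K) * (rootElement e ((geomR (a, b, c)).2.1 : K) *
        rootElement f ((geomR (a, b, c)).2.2 : K)) := by
  have hac : (a + c : K) ≠ 0 := (add_pos a.2 c.2).ne'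
  rw [h.rootElement_mul_expand, h.symm.rootElement_mul_expand]
  simp only [geomR, PosElt.coe_div, Positive.val_mul, Positive.coe_add]
  match_scalars <;> field_simp
  ring

theorem IsC2Pair.rootElement_braid {e f : A} (h : IsC2Pair e f) (a b c d : PosElt K) :
    rootElement e (a : K) *
        (rootElement f (b : K) * (rootElement e (c : K) * rootElement f (d : K))) =
      rootElement f ((geomK (a, b, c, d)).2.2.2 : K) *
        (rootElement e ((geomK (a, b, c, d)).2.2.1 : K) *
          (rootElement f ((geomK (a, b, c, d)).2.1 : K) *
            rootElement e ((geomK (a, b, c, d)).1 : K))) := by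
  obtain ⟨a, ha⟩ := a
  obtain ⟨b, hb⟩ := b
  obtain ⟨c, hc⟩ := c
  obtain ⟨d, hd⟩ := d
  rw [h.rootElement_mul_expand_left, h.rootElement_mul_expand_right]
  simp only [geomK, PosElt.coe_div, Positive.val_mul, Positive.coe_add]
  match_scalars <;> field_simp <;> ring

end BraidRelations

section Words

variable {ι κ A K : Type*} [Field K] [LinearOrder K] [Ring A] [Algebra K A]

/-- The product of root elements along a word. A letter `(i, p)` of the word stands for the root
element of `e i` whose parameter is the `p`-th component of `v`. -/
def wordProd (e : ι → A) (w : List (ι × κ)) (v : κ → PosElt K) : A :=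
  (w.map fun l => rootElement (e l.1) (v l.2 : K)).prod

theorem wordProd_cons (e : ι → A) (l : ι × κ) (w : List (ι × κ)) (v : κ → PosElt K) :
    wordProd e (l :: w) v = rootElement (e l.1) (v l.2 : K) * wordProd e w v := by
  simp only [wordProd, List.map_cons, List.prod_cons]

theorem wordProd_append (e : ι → A) (u w : List (ι × κ)) (v : κ → PosElt K) :
    wordProd e (u ++ w) v = wordProd e u v * wordProd e w v := by
  simp only [wordProd, List.map_append, List.prod_append]

theorem wordProd_congr (e : ι → A) {w : List (ι × κ)} {v v' : κ → PosElt K}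
    (h : ∀ l ∈ w, v l.2 = v' l.2) : wordProd e w v = wordProd e w v' :=
  congrArg List.prod (List.map_congr_left fun l hl => by rw [h l hl])

theorem wordProd_swap {e : ι → A} {i j : ι} (h : Commute (e i) (e j))
    (u : List (ι × κ)) {w : List (ι × κ)} {p q : κ} {v : κ → PosElt K} :
    wordProd e (u ++ (i, p) :: (j, q) :: w) v = wordProd e (u ++ (j, q) :: (i, p) :: w) v := by
  simp only [wordProd_append, wordProd_cons, ← mul_assoc (rootElement _ _),
    (rootElement_commute h (v p : K) (v q : K)).eq]

theorem app3_apply_of_notMem {V : Type*} {N : ℕ} (f : V × V × V → V × V × V) {i j k m : Fin N}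
    (v : Fin N → V) (hm : m ∉ [i, j, k]) : app3 f i j k v m = v m := by
  simp_all [app3]

theorem app4_apply_of_notMem {V : Type*} {N : ℕ} (f : V × V × V × V → V × V × V × V)
    {i j k l m : Fin N} (v : Fin N → V) (hm : m ∉ [i, j, k, l]) : app4 f i j k l v m = v m := by
  simp_all [app4]

variable [IsStrictOrderedRing K] {N : ℕ} {e : ι → A} {i j : ι}

theorem wordProd_app3_geomR (h : IsA2Pair (e i) (e j)) (u : List (ι × Fin N))
    {w : List (ι × Fin N)} {p q r : Fin N} {v : Fin N → PosElt K} (hpqr : [p, q, r].Nodup)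
    (huw : ∀ l ∈ u ++ w, l.2 ∉ [p, q, r]) :
    wordProd e (u ++ (i, r) :: (j, q) :: (i, p) :: w) v =
      wordProd e (u ++ (j, p) :: (i, q) :: (j, r) :: w) (app3 geomR p q r v) := by
  have hfixed : ∀ l ∈ u ++ w, v l.2 = app3 geomR p q r v l.2 := fun l hl =>
    (app3_apply_of_notMem geomR v (huw l hl)).symm
  have hu := wordProd_congr e fun l hl => hfixed l (List.mem_append_left w hl)
  have hw := wordProd_congr e fun l hl => hfixed l (List.mem_append_right u hl)
  obtain ⟨⟨hqp, hrp⟩, hrq⟩ : (q ≠ p ∧ r ≠ p) ∧ r ≠ q := by simpa [eq_comm] using hpqr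
  have hbraid := congrArg (· * wordProd e w v) (h.rootElement_braid (v p) (v q) (v r))
  simp only [mul_assoc] at hbraid
  simp only [wordProd_append, wordProd_cons, ← hu, ← hw, hbraid]
  simp only [app3, if_true, if_neg hqp, if_neg hrp, if_neg hrq]

theorem wordProd_app4_geomK (h : IsC2Pair (e i) (e j)) (u : List (ι × Fin N))
    {w : List (ι × Fin N)} {p q r s : Fin N} {v : Fin N → PosElt K} (hpqrs : [p, q, r, s].Nodup)
    (huw : ∀ l ∈ u ++ w, l.2 ∉ [p, q, r, s]) :
    wordProd e (u ++ (i, p) :: (j, q) :: (i, r) :: (j, s) :: w) v =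
      wordProd e (u ++ (j, s) :: (i, r) :: (j, q) :: (i, p) :: w) (app4 geomK p q r s v) := by
  have hfixed : ∀ l ∈ u ++ w, v l.2 = app4 geomK p q r s v l.2 := fun l hl =>
    (app4_apply_of_notMem geomK v (huw l hl)).symm
  have hu := wordProd_congr e fun l hl => hfixed l (List.mem_append_left w hl)
  have hw := wordProd_congr e fun l hl => hfixed l (List.mem_append_right u hl)
  obtain ⟨⟨hqp, hrp, hsp⟩, ⟨hrq, hsq⟩, hsr⟩ :
      (q ≠ p ∧ r ≠ p ∧ s ≠ p) ∧ (r ≠ q ∧ s ≠ q) ∧ s ≠ r := by simpa [eq_comm] using hpqrs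
  have hbraid := congrArg (· * wordProd e w v) (h.rootElement_braid (v p) (v q) (v r) (v s))
  simp only [mul_assoc] at hbraid
  simp only [wordProd_append, wordProd_cons, ← hu, ← hw, hbraid]
  simp only [app4, if_true, if_neg hqp, if_neg hrp, if_neg hsp, if_neg hrq, if_neg hsq,
    if_neg hsr]

end Words

section SymplecticGenerators

open Matrix

/-- The Chevalley generators `e₁, e₂, e₃` of the upper triangular part of `𝔰𝔭₆`, of type `C₃`. -/
def chevalley (K : Type*) [CommRing K] (i : Fin 3) : Matrix (Fin 6) (Fin 6) K :=
  ![single 0 1 1 + single 4 5 1, single 1 2 1 + single 3 4 1, single 2 3 1] i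

variable {K : Type*} [CommRing K]

theorem isA2Pair_chevalley : IsA2Pair (chevalley K 0) (chevalley K 1) := by
  constructor <;> simp [chevalley, add_mul, mul_add]

theorem isC2Pair_chevalley : IsC2Pair (chevalley K 1) (chevalley K 2) := by
  constructor <;> simp [chevalley, add_mul, mul_add]

theorem commute_chevalley : Commute (chevalley K 0) (chevalley K 2) := by
  simp [chevalley, Commute, SemiconjBy, add_mul, mul_add]

theorem rootElement_chevalley_zero_mulVec (t : K) (y : Fin 6 → K) :
    rootElement (chevalley K 0) t *ᵥ y = ![y 0 + t * y 1, y 1, y 2, y 3, y 4 + t * y 5, y 5] := by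
  ext k; fin_cases k <;> simp [rootElement, chevalley, add_mulVec, single_mulVec]

theorem rootElement_chevalley_one_mulVec (t : K) (y : Fin 6 → K) :
    rootElement (chevalley K 1) t *ᵥ y = ![y 0, y 1 + t * y 2, y 2, y 3 + t * y 4, y 4, y 5] := by
  ext k; fin_cases k <;> simp [rootElement, chevalley, add_mulVec, single_mulVec]

theorem rootElement_chevalley_two_mulVec (t : K) (y : Fin 6 → K) :
    rootElement (chevalley K 2) t *ᵥ y = ![y 0, y 1, y 2 + t * y 3, y 3, y 4, y 5] := by
  ext k; fin_cases k <;> simp [rootElement, chevalley, add_mulVec, single_mulVec]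

end SymplecticGenerators

section ReducedWords

open Matrix

variable {K : Type*} [Field K] [LinearOrder K]

/-- The product of root elements of the symplectic group `Sp₆` along a word. -/
abbrev spProd (w : List (Fin 3 × Fin 9)) (v : Fin 9 → PosElt K) : Matrix (Fin 6) (Fin 6) K :=
  wordProd (chevalley K) w v

/-- A reduced word of the longest element of the Weyl group of type `C₃`, its letters labelled by
the nine positions. -/
def startWord : List (Fin 3 × Fin 9) :=
  [(0, 8), (1, 7), (2, 6), (0, 5), (1, 4), (0, 3), (2, 2), (1, 1), (2, 0)]

/-- The reversal of `startWord`, up to commuting adjacent letters `0` and `2`. -/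
def endWord : List (Fin 3 × Fin 9) :=
  [(2, 0), (1, 1), (0, 3), (2, 2), (1, 4), (2, 6), (0, 5), (1, 7), (0, 8)]

theorem spProd_endWord_mulVec (v : Fin 9 → PosElt K) (y : Fin 6 → K) :
    spProd endWord v *ᵥ y =
      rootElement (chevalley K 2) (v 0 : K) *ᵥ rootElement (chevalley K 1) (v 1 : K) *ᵥ
      rootElement (chevalley K 0) (v 3 : K) *ᵥ rootElement (chevalley K 2) (v 2 : K) *ᵥ
      rootElement (chevalley K 1) (v 4 : K) *ᵥ rootElement (chevalley K 2) (v 6 : K) *ᵥ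
      rootElement (chevalley K 0) (v 5 : K) *ᵥ rootElement (chevalley K 1) (v 7 : K) *ᵥ
      rootElement (chevalley K 0) (v 8 : K) *ᵥ y := by
  simp only [wordProd, endWord, List.map_cons, List.map_nil, List.prod_cons, List.prod_nil,
    mul_one, mulVec_mulVec]

theorem spProd_endWord_entries (v : Fin 9 → PosElt K) (W : Matrix (Fin 6) (Fin 6) K)
    (hW : W = spProd endWord v) :
    W 0 1 = v 3 + v 5 + v 8 ∧ W 0 2 = v 3 * v 4 + (v 3 + v 5) * v 7 ∧
    W 0 3 = v 3 * v 4 * v 6 ∧ W 0 4 = v 3 * v 4 * v 6 * v 7 ∧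
    W 0 5 = v 3 * v 4 * v 6 * v 7 * v 8 ∧ W 1 2 = v 1 + v 4 + v 7 ∧
    W 1 3 = v 1 * v 2 + (v 1 + v 4) * v 6 ∧
    W 1 4 = v 1 * v 2 * v 4 + (v 1 * v 2 + (v 1 + v 4) * v 6) * v 7 ∧
    W 2 3 = v 0 + v 2 + v 6 := by
  have hentry (i j : Fin 6) : W i j = (spProd endWord v *ᵥ Pi.single j 1) i := by
    rw [hW, mulVec_single_one, col_apply]
  simp only [hentry, spProd_endWord_mulVec, rootElement_chevalley_zero_mulVec,
    rootElement_chevalley_one_mulVec, rootElement_chevalley_two_mulVec]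
  refine ⟨?_, ?_, ?_, ?_, ?_, ?_, ?_, ?_, ?_⟩ <;> simp <;> ring

/-- The rational functions of a unitriangular matrix that recover the parameters of its
factorization along `endWord`. -/
def endWordParams (W : Matrix (Fin 6) (Fin 6) K) : Fin 9 → K :=
  let t₇ := W 0 4 / W 0 3
  let t₈ := W 0 5 / W 0 4
  let t₃t₄ := W 0 2 - (W 0 1 - t₈) * t₇
  let t₆ := W 0 3 / t₃t₄
  let t₁t₂ := W 1 3 - (W 1 2 - t₇) * t₆
  let t₄ := (W 1 4 - W 1 3 * t₇) / t₁t₂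
  let t₁ := W 1 2 - t₄ - t₇
  let t₃ := t₃t₄ / t₄
  let t₂ := t₁t₂ / t₁
  ![W 2 3 - t₂ - t₆, t₁, t₂, t₃, t₄, W 0 1 - t₃ - t₈, t₆, t₇, t₈]

theorem endWordParams_spProd (v : Fin 9 → PosElt K) :
    endWordParams (spProd endWord v) = fun i => (v i : K) := by
  generalize hW : spProd endWord v = W
  obtain ⟨h01, h02, h03, h04, h05, h12, h13, h14, h23⟩ := spProd_endWord_entries v W hW.symm
  have hne (i : Fin 9) : (v i : K) ≠ 0 := (v i).2.ne'
  have ht₇ : W 0 4 / W 0 3 = v 7 := by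
    rw [h03, h04]; field_simp [hne]
  have ht₈ : W 0 5 / W 0 4 = v 8 := by
    rw [h04, h05]; field_simp [hne]
  have ht₃t₄ : W 0 2 - (W 0 1 - v 8) * v 7 = v 3 * v 4 := by
    rw [h01, h02]; ring
  have ht₆ : W 0 3 / (v 3 * v 4 : K) = v 6 := by
    rw [h03]; field_simp [hne]
  have ht₁t₂ : W 1 3 - (W 1 2 - v 7) * v 6 = v 1 * v 2 := by
    rw [h12, h13]; ring
  have ht₄ : (W 1 4 - W 1 3 * v 7) / (v 1 * v 2 : K) = v 4 := by
    rw [h13, h14]; field_simp [hne]; ring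
  have ht₁ : W 1 2 - v 4 - v 7 = (v 1 : K) := by
    rw [h12]; ring
  have ht₃ : (v 3 * v 4 / v 4 : K) = v 3 := mul_div_cancel_right₀ _ (hne 4)
  have ht₂ : (v 1 * v 2 / v 1 : K) = v 2 := mul_div_cancel_left₀ _ (hne 1)
  have ht₅ : W 0 1 - v 3 - v 8 = (v 5 : K) := by
    rw [h01]; ring
  have ht₀ : W 2 3 - v 2 - v 6 = (v 0 : K) := by
    rw [h23]; ring
  simp only [endWordParams, ht₇, ht₈, ht₃t₄, ht₆, ht₁t₂, ht₄, ht₁, ht₃, ht₂, ht₅, ht₀]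
  funext i
  fin_cases i <;> rfl

theorem spProd_endWord_injective :
    Function.Injective (spProd (K := K) endWord) := fun v w h => by
  have hparams := congrArg endWordParams h
  rw [endWordParams_spProd, endWordParams_spProd] at hparams
  exact funext fun i => Subtype.ext (congrFun hparams i)

variable [IsStrictOrderedRing K]

theorem spProd_startWord_eq_left (v : Fin 9 → PosElt K) :
    spProd startWord v = spProd endWord
      (app3 geomR 5 7 8 <| app4 geomK 8 6 4 2 <| app3 geomR 1 3 8 <| app3 geomR 1 4 7 <|
        app4 geomK 7 6 3 0 <| app4 geomK 5 2 1 0 <| app3 geomR 3 4 5 v) :=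
  calc
    spProd [(0, 8), (1, 7), (2, 6), (0, 5), (1, 4), (0, 3), (2, 2), (1, 1), (2, 0)] v
    _ = spProd [(0, 8), (1, 7), (2, 6), (1, 3), (0, 4), (1, 5), (2, 2), (1, 1), (2, 0)] _ :=
      wordProd_app3_geomR isA2Pair_chevalley [(0, 8), (1, 7), (2, 6)] (by decide) (by decide)
    _ = spProd [(0, 8), (1, 7), (2, 6), (1, 3), (0, 4), (2, 0), (1, 1), (2, 2), (1, 5)] _ :=
      wordProd_app4_geomK isC2Pair_chevalley [(0, 8), (1, 7), (2, 6), (1, 3), (0, 4)]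
        (by decide) (by decide)
    _ = spProd [(0, 8), (1, 7), (2, 6), (1, 3), (2, 0), (0, 4), (1, 1), (2, 2), (1, 5)] _ :=
      wordProd_swap commute_chevalley [(0, 8), (1, 7), (2, 6), (1, 3)]
    _ = spProd [(0, 8), (2, 0), (1, 3), (2, 6), (1, 7), (0, 4), (1, 1), (2, 2), (1, 5)] _ :=
      wordProd_app4_geomK isC2Pair_chevalley [(0, 8)] (by decide) (by decide)
    _ = spProd [(0, 8), (2, 0), (1, 3), (2, 6), (0, 1), (1, 4), (0, 7), (2, 2), (1, 5)] _ :=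
      wordProd_app3_geomR isA2Pair_chevalley.symm [(0, 8), (2, 0), (1, 3), (2, 6)]
        (by decide) (by decide)
    _ = spProd [(2, 0), (0, 8), (1, 3), (2, 6), (0, 1), (1, 4), (0, 7), (2, 2), (1, 5)] _ :=
      wordProd_swap commute_chevalley []
    _ = spProd [(2, 0), (0, 8), (1, 3), (0, 1), (2, 6), (1, 4), (0, 7), (2, 2), (1, 5)] _ :=
      wordProd_swap commute_chevalley.symm [(2, 0), (0, 8), (1, 3)]
    _ = spProd [(2, 0), (1, 1), (0, 3), (1, 8), (2, 6), (1, 4), (0, 7), (2, 2), (1, 5)] _ :=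
      wordProd_app3_geomR isA2Pair_chevalley [(2, 0)] (by decide) (by decide)
    _ = spProd [(2, 0), (1, 1), (0, 3), (1, 8), (2, 6), (1, 4), (2, 2), (0, 7), (1, 5)] _ :=
      wordProd_swap commute_chevalley [(2, 0), (1, 1), (0, 3), (1, 8), (2, 6), (1, 4)]
    _ = spProd [(2, 0), (1, 1), (0, 3), (2, 2), (1, 4), (2, 6), (1, 8), (0, 7), (1, 5)] _ :=
      wordProd_app4_geomK isC2Pair_chevalley [(2, 0), (1, 1), (0, 3)] (by decide) (by decide)
    _ = spProd [(2, 0), (1, 1), (0, 3), (2, 2), (1, 4), (2, 6), (0, 5), (1, 7), (0, 8)] _ :=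
      wordProd_app3_geomR isA2Pair_chevalley.symm [(2, 0), (1, 1), (0, 3), (2, 2), (1, 4), (2, 6)]
        (by decide) (by decide)

theorem spProd_startWord_eq_right (v : Fin 9 → PosElt K) :
    spProd startWord v = spProd endWord
      (app3 geomR 3 4 5 <| app4 geomK 5 2 1 0 <| app4 geomK 7 6 3 0 <| app3 geomR 1 4 7 <|
        app3 geomR 1 3 8 <| app4 geomK 8 6 4 2 <| app3 geomR 5 7 8 v) :=
  calc
    spProd [(0, 8), (1, 7), (2, 6), (0, 5), (1, 4), (0, 3), (2, 2), (1, 1), (2, 0)] v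
    _ = spProd [(0, 8), (1, 7), (0, 5), (2, 6), (1, 4), (0, 3), (2, 2), (1, 1), (2, 0)] _ :=
      wordProd_swap commute_chevalley.symm [(0, 8), (1, 7)]
    _ = spProd [(1, 5), (0, 7), (1, 8), (2, 6), (1, 4), (0, 3), (2, 2), (1, 1), (2, 0)] _ :=
      wordProd_app3_geomR isA2Pair_chevalley [] (by decide) (by decide)
    _ = spProd [(1, 5), (0, 7), (1, 8), (2, 6), (1, 4), (2, 2), (0, 3), (1, 1), (2, 0)] _ :=
      wordProd_swap commute_chevalley [(1, 5), (0, 7), (1, 8), (2, 6), (1, 4)]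
    _ = spProd [(1, 5), (0, 7), (2, 2), (1, 4), (2, 6), (1, 8), (0, 3), (1, 1), (2, 0)] _ :=
      wordProd_app4_geomK isC2Pair_chevalley [(1, 5), (0, 7)] (by decide) (by decide)
    _ = spProd [(1, 5), (0, 7), (2, 2), (1, 4), (2, 6), (0, 1), (1, 3), (0, 8), (2, 0)] _ :=
      wordProd_app3_geomR isA2Pair_chevalley.symm [(1, 5), (0, 7), (2, 2), (1, 4), (2, 6)]
        (by decide) (by decide)
    _ = spProd [(1, 5), (2, 2), (0, 7), (1, 4), (2, 6), (0, 1), (1, 3), (0, 8), (2, 0)] _ :=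
      wordProd_swap commute_chevalley [(1, 5)]
    _ = spProd [(1, 5), (2, 2), (0, 7), (1, 4), (0, 1), (2, 6), (1, 3), (0, 8), (2, 0)] _ :=
      wordProd_swap commute_chevalley.symm [(1, 5), (2, 2), (0, 7), (1, 4)]
    _ = spProd [(1, 5), (2, 2), (1, 1), (0, 4), (1, 7), (2, 6), (1, 3), (0, 8), (2, 0)] _ :=
      wordProd_app3_geomR isA2Pair_chevalley [(1, 5), (2, 2)] (by decide) (by decide)
    _ = spProd [(1, 5), (2, 2), (1, 1), (0, 4), (1, 7), (2, 6), (1, 3), (2, 0), (0, 8)] _ :=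
      wordProd_swap commute_chevalley [(1, 5), (2, 2), (1, 1), (0, 4), (1, 7), (2, 6), (1, 3)]
    _ = spProd [(1, 5), (2, 2), (1, 1), (0, 4), (2, 0), (1, 3), (2, 6), (1, 7), (0, 8)] _ :=
      wordProd_app4_geomK isC2Pair_chevalley [(1, 5), (2, 2), (1, 1), (0, 4)]
        (by decide) (by decide)
    _ = spProd [(1, 5), (2, 2), (1, 1), (2, 0), (0, 4), (1, 3), (2, 6), (1, 7), (0, 8)] _ :=
      wordProd_swap commute_chevalley [(1, 5), (2, 2), (1, 1)]
    _ = spProd [(2, 0), (1, 1), (2, 2), (1, 5), (0, 4), (1, 3), (2, 6), (1, 7), (0, 8)] _ :=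
      wordProd_app4_geomK isC2Pair_chevalley [] (by decide) (by decide)
    _ = spProd [(2, 0), (1, 1), (2, 2), (0, 3), (1, 4), (0, 5), (2, 6), (1, 7), (0, 8)] _ :=
      wordProd_app3_geomR isA2Pair_chevalley.symm [(2, 0), (1, 1), (2, 2)] (by decide) (by decide)
    _ = spProd [(2, 0), (1, 1), (0, 3), (2, 2), (1, 4), (0, 5), (2, 6), (1, 7), (0, 8)] _ :=
      wordProd_swap commute_chevalley.symm [(2, 0), (1, 1)]
    _ = spProd [(2, 0), (1, 1), (0, 3), (2, 2), (1, 4), (2, 6), (0, 5), (1, 7), (0, 8)] _ :=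
      wordProd_swap commute_chevalley [(2, 0), (1, 1), (0, 3), (2, 2), (1, 4)]

theorem geomRK_3d_reflection_B3 :
    app3 geomR 5 7 8 ∘ app4 geomK 8 6 4 2 ∘ app3 geomR 1 3 8 ∘ app3 geomR 1 4 7 ∘
        app4 geomK 7 6 3 0 ∘ app4 geomK 5 2 1 0 ∘ app3 geomR 3 4 5 =
      app3 geomR 3 4 5 ∘ app4 geomK 5 2 1 0 ∘ app4 geomK 7 6 3 0 ∘ app3 geomR 1 4 7 ∘
        app3 geomR 1 3 8 ∘ app4 geomK 8 6 4 2 ∘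
        (app3 geomR 5 7 8 : (Fin 9 → PosElt K) → Fin 9 → PosElt K) := by
  funext v
  apply spProd_endWord_injective
  simp only [Function.comp_apply]
  rw [← spProd_startWord_eq_left, ← spProd_startWord_eq_right]

end ReducedWords

section Tropicalization

open ArchimedeanClass

variable {K : Type*} [Field K] [LinearOrder K] [IsStrictOrderedRing K]

theorem archimedeanClassMk_add_of_pos {M : Type*} [AddCommGroup M] [LinearOrder M]
    [IsOrderedAddMonoid M] {a b : M} (ha : 0 < a) (hb : 0 < b) :
    mk (a + b) = min (mk a) (mk b) := by
  have hab : a + b ∈ Set.Ici 0 := (add_pos ha hb).le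
  refine le_antisymm (le_min ?_ ?_) (min_le_mk_add a b)
  · exact mk_antitoneOn ha.le hab (le_add_of_nonneg_right hb.le)
  · exact mk_antitoneOn hb.le hab (le_add_of_nonneg_left ha.le)

theorem strictMono_archimedeanClassMk_zpow {ε : K} (hε : ε ≠ 0) (hε' : 0 < mk ε) :
    StrictMono fun k : ℤ => mk (ε ^ k) := by
  refine strictMono_int_of_lt_succ fun k => ?_
  have hk : mk (ε ^ k) ≠ ⊤ := mk_eq_top_iff.not.mpr (zpow_ne_zero k hε)
  calc mk (ε ^ k) = mk (ε ^ k) + 0 := (add_zero _).symm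
    _ < mk (ε ^ k) + mk ε := by
      exact lt_of_le_of_ne (by gcongr) fun h => hε'.ne (add_left_cancel_of_ne_top hk h)
    _ = mk (ε ^ (k + 1)) := by rw [zpow_add_one₀ hε, mk_mul]

/-- `a` has the order of magnitude of `ε ^ k`. -/
def HasOrder (ε a : PosElt K) (k : ℤ) : Prop := mk (a : K) = mk ((ε : K) ^ k)

namespace HasOrder

variable {ε a b : PosElt K} {k l : ℤ}

theorem mul (ha : HasOrder ε a k) (hb : HasOrder ε b l) : HasOrder ε (a * b) (k + l) := by
  rw [HasOrder, Positive.val_mul, mk_mul, ha, hb, zpow_add₀ ε.2.ne', mk_mul]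

theorem div (ha : HasOrder ε a k) (hb : HasOrder ε b l) : HasOrder ε (a / b) (k - l) := by
  rw [HasOrder, PosElt.coe_div, mk_div, ha, hb, zpow_sub₀ ε.2.ne', mk_div]

theorem add (hε : 0 < mk (ε : K)) (ha : HasOrder ε a k) (hb : HasOrder ε b l) :
    HasOrder ε (a + b) (min k l) := by
  rw [HasOrder, Positive.coe_add, archimedeanClassMk_add_of_pos a.2 b.2, ha, hb]
  exact ((strictMono_archimedeanClassMk_zpow ε.2.ne' hε).monotone.map_min).symm

theorem unique (hε : 0 < mk (ε : K)) (hk : HasOrder ε a k) (hl : HasOrder ε a l) : k = l :=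
  (strictMono_archimedeanClassMk_zpow ε.2.ne' hε).injective (hk.symm.trans hl)

end HasOrder

/-- `f` is the tropicalization of `F` with respect to `ε`: it describes the effect of `F` on orders
of magnitude. -/
def Tropicalizes {κ : Type*} (ε : PosElt K) (F : (κ → PosElt K) → κ → PosElt K)
    (f : (κ → ℕ) → κ → ℕ) : Prop :=
  ∀ a v, (∀ i, HasOrder ε (a i) (v i)) → ∀ i, HasOrder ε (F a i) (f v i)

section Tropicalizes

variable {κ : Type*} {ε : PosElt K} {F G : (κ → PosElt K) → κ → PosElt K} {f g : (κ → ℕ) → κ → ℕ}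

theorem Tropicalizes.comp (hG : Tropicalizes ε G g) (hF : Tropicalizes ε F f) :
    Tropicalizes ε (G ∘ F) (g ∘ f) :=
  fun a v h => hG (F a) (f v) (hF a v h)

theorem Tropicalizes.unique (hε : 0 < mk (ε : K)) (hf : Tropicalizes ε F f)
    (hg : Tropicalizes ε F g) : f = g := by
  funext v i
  have hlift : ∀ j, HasOrder ε (ε ^ v j) (v j) := fun j => by
    rw [HasOrder, Positive.val_pow, zpow_natCast]
  exact_mod_cast (hf _ v hlift i).unique hε (hg _ v hlift i)

variable {N : ℕ}

theorem tropicalizes_app3_geomR (hε : 0 < mk (ε : K)) (i j k : Fin N) :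
    Tropicalizes ε (app3 geomR i j k) (app3 combR i j k) := by
  intro a v h m
  have hik := (h i).add hε (h k)
  simp only [app3, geomR, combR]
  split_ifs
  · convert ((h i).mul (h j)).div hik using 1
    omega
  · convert hik using 1
    omega
  · convert ((h j).mul (h k)).div hik using 1
    omega
  · exact h m

theorem tropicalizes_app4_geomK (hε : 0 < mk (ε : K)) (i j k l : Fin N) :
    Tropicalizes ε (app4 geomK i j k l) (app4 combK i j k l) := by
  intro a v h m
  have hik := (h i).add hε (h k)
  have hs := ((h i).mul (h j)).add hε (hik.mul (h l))
  have ht := (((h i).mul (h i)).mul (h j)).add hε ((hik.mul hik).mul (h l))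
  simp only [app4, geomK, combK]
  split_ifs
  · convert (((h i).mul (h j)).mul (h k)).div hs using 1
    omega
  · convert (hs.mul hs).div ht using 1
    omega
  · convert ht.div hs using 1
    omega
  · convert (((h j).mul (h k)).mul (h k)).mul (h l) |>.div ht using 1
    omega
  · exact h m

end Tropicalizes

end Tropicalization

/-- The 3D reflection equation of type B₃ on ℕ⁹ (positions written 1-based in the paper,
0-based here): `R₆₈₉ K₉₇₅₃ R₂₄₉ R₂₅₈ K₈₇₄₁ K₆₃₂₁ R₄₅₆ = R₄₅₆ K₆₃₂₁ K₈₇₄₁ R₂₅₈ R₂₄₉ K₉₇₅₃ R₆₈₉`,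
where `K` is applied at the listed positions read and written in the listed, descending, order. -/
theorem combRK_3d_reflection_B3 :
    app3 combR 5 7 8 ∘ app4 combK 8 6 4 2 ∘ app3 combR 1 3 8 ∘ app3 combR 1 4 7 ∘
        app4 combK 7 6 3 0 ∘ app4 combK 5 2 1 0 ∘ app3 combR 3 4 5 =
      app3 combR 3 4 5 ∘ app4 combK 5 2 1 0 ∘ app4 combK 7 6 3 0 ∘ app3 combR 1 4 7 ∘
        app3 combR 1 3 8 ∘ app4 combK 8 6 4 2 ∘
        (app3 combR 5 7 8 : (Fin 9 → ℕ) → Fin 9 → ℕ) := by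
  let ε : PosElt ℝ* := ⟨Hyperreal.epsilon, Hyperreal.epsilon_pos⟩
  have hε : 0 < ArchimedeanClass.mk (ε : ℝ*) := Hyperreal.archimedeanClassMk_epsilon_pos
  have hR (i j k : Fin 9) := tropicalizes_app3_geomR hε i j k
  have hK (i j k l : Fin 9) := tropicalizes_app4_geomK hε i j k l
  have hleft := (hR 5 7 8).comp <| (hK 8 6 4 2).comp <| (hR 1 3 8).comp <| (hR 1 4 7).comp <|
    (hK 7 6 3 0).comp <| (hK 5 2 1 0).comp <| hR 3 4 5
  have hright := (hR 3 4 5).comp <| (hK 5 2 1 0).comp <| (hK 7 6 3 0).comp <| (hR 1 4 7).comp <|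
    (hR 1 3 8).comp <| (hK 8 6 4 2).comp <| hR 5 7 8
  rw [geomRK_3d_reflection_B3] at hleft
  exact hleft.unique hε hright
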